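/- arXiv:2306.02079 — 2 statements merged into one kernel-verified Lean document; each statement's English description precedes it below -/
import Mathlib

section
/- Let G be a connected graph with maximum degree Δ(G), let π be an ic-partition of G, and let X be a class of π. Then X forms an independent coalition with at most Δ(G) other classes of π. -/
namespace ICNL

variable {V : Type*}

/-- `S` is a dominating set of `G`. -/
def Dominating (G : SimpleGraph V) (S : Set V) : Prop :=
  ∀ v : V, v ∈ S ∨ ∃ u ∈ S, G.Adj u v

/-- `S` is an independent set of `G`. -/
def IndepSet (G : SimpleGraph V) (S : Set V) : Prop :=
  ∀ ⦃u : V⦄, u ∈ S → ∀ ⦃v : V⦄, v ∈ S → ¬ G.Adj u v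

/-- `S` is an independent dominating set of `G`. -/
def IndepDom (G : SimpleGraph V) (S : Set V) : Prop :=
  IndepSet G S ∧ Dominating G S

/-- `A` and `B` form an independent coalition in `G`. -/
def ICCoalition (G : SimpleGraph V) (A B : Set V) : Prop :=
  Disjoint A B ∧ IndepSet G A ∧ IndepSet G B ∧
    ¬ IndepDom G A ∧ ¬ IndepDom G B ∧ IndepDom G (A ∪ B)

/-- `π` is a partition of the vertex set into nonempty classes. -/
def IsPartition (π : Finset (Finset V)) : Prop :=
  (∀ A ∈ π, A.Nonempty) ∧ ∀ v : V, ∃! A : Finset V, A ∈ π ∧ v ∈ A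

/-- `π` is an independent coalition partition of `G`. -/
def IsICPartition (G : SimpleGraph V) (π : Finset (Finset V)) : Prop :=
  IsPartition π ∧
    ∀ A ∈ π, (∃ v : V, (A : Set V) = {v} ∧ Dominating G (A : Set V)) ∨
      (¬ IndepDom G (A : Set V) ∧
        ∃ B ∈ π, B ≠ A ∧ ICCoalition G (A : Set V) (B : Set V))

/-- The independent coalition number: the maximum number of classes of an
ic-partition of `G`. -/
noncomputable def IC (G : SimpleGraph V) : ℕ :=
  sSup {k | ∃ π : Finset (Finset V), IsICPartition G π ∧ π.card = k}

/-!
Let `U` be the set of vertices that `X` fails to dominate. A partner of `X` lies inside `U`, since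
it is disjoint from `X` and the union is independent, and it must dominate all of `U`. When `X` has
a partner, both `U` and its complement are nonempty, so connectedness yields an edge `vw` with
`v ∈ U` and `w ∉ U`. Every partner meets the closed neighborhood of `v`, but not in `w`; that leaves
`deg v` vertices, and disjoint partners use distinct ones.
-/

section Transversal

variable {ι α : Type*} {s : Set ι} {f : ι → Set α} {t : Set α}

theorem encard_le_encard_of_pairwiseDisjoint_of_inter_nonempty (hs : s.PairwiseDisjoint f)
    (hft : ∀ i ∈ s, (f i ∩ t).Nonempty) : s.encard ≤ t.encard := by
  rcases s.eq_empty_or_nonempty with rfl | ⟨i, hi⟩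
  · simp
  have : Nonempty α := ⟨(hft i hi).some⟩
  choose! g hgf hgt using hft
  refine Set.encard_le_encard_of_injOn hgt fun i hi j hj hij => ?_
  exact hs.elim_set hi hj (g i) (hgf i hi) (hij ▸ hgf j hj)

end Transversal

section Graph

variable {G : SimpleGraph V} {S A B : Set V} {v w : V}

theorem exists_adj_mem_notMem_of_preconnected (hG : G.Preconnected) (hS : S.Nonempty)
    (hSc : Sᶜ.Nonempty) : ∃ v ∈ S, ∃ w ∉ S, G.Adj v w := by
  obtain ⟨a, ha⟩ := hS
  obtain ⟨b, hb⟩ := hSc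
  obtain ⟨p⟩ := hG a b
  obtain ⟨d, -, hfst, hsnd⟩ := p.exists_boundary_dart S ha hb
  exact ⟨d.fst, hfst, d.snd, hsnd, d.adj⟩

theorem encard_neighborSet (G : SimpleGraph V) (v : V) [Fintype (G.neighborSet v)] :
    (G.neighborSet v).encard = G.degree v := by
  rw [← G.coe_neighborFinset, Set.encard_coe_eq_coe_finsetCard, G.card_neighborFinset_eq_degree]

/-- The vertices that `S` fails to dominate: those outside the closed neighborhood of `S`.
A coalition partner of `S` lies inside this set and has to dominate it. -/
def undominated (G : SimpleGraph V) (S : Set V) : Set V :=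
  {v | v ∉ S ∧ ∀ u ∈ S, ¬ G.Adj u v}

theorem undominated_nonempty_iff : (undominated G S).Nonempty ↔ ¬ Dominating G S := by
  simp only [Set.Nonempty, undominated, Set.mem_ofPred_eq, Dominating, not_forall, not_or,
    not_exists, not_and]

theorem IndepSet.subset_undominated (hind : IndepSet G (A ∪ B)) (hdisj : Disjoint A B) :
    B ⊆ undominated G A :=
  fun _ hb => ⟨hdisj.notMem_of_mem_right hb, fun _ ha => hind (Or.inl ha) (Or.inr hb)⟩

theorem Dominating.inter_insert_neighborSet_nonempty (hdom : Dominating G (A ∪ B))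
    (hv : v ∈ undominated G A) : (B ∩ insert v (G.neighborSet v)).Nonempty := by
  rcases hdom v with (hvA | hvB) | ⟨u, huA | huB, huv⟩
  · exact absurd hvA hv.1
  · exact ⟨v, hvB, Set.mem_insert v _⟩
  · exact absurd huv (hv.2 u huA)
  · exact ⟨u, huB, Set.mem_insert_of_mem v huv.symm⟩

theorem ICCoalition.undominated_left_nonempty (h : ICCoalition G A B) :
    (undominated G A).Nonempty :=
  have ⟨_, hA, _, hA', _, _⟩ := h
  undominated_nonempty_iff.2 fun hdom => hA' ⟨hA, hdom⟩

theorem ICCoalition.left_nonempty (h : ICCoalition G A B) : A.Nonempty := by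
  obtain ⟨_, _, _, _, hB, hAB⟩ := h
  rw [Set.nonempty_iff_ne_empty]
  rintro rfl
  exact hB (Set.empty_union B ▸ hAB)

theorem ICCoalition.inter_insert_neighborSet_diff_nonempty (h : ICCoalition G A B)
    (hv : v ∈ undominated G A) (hw : w ∉ undominated G A) :
    (B ∩ insert v (G.neighborSet v \ {w})).Nonempty := by
  obtain ⟨hdisj, _, _, _, _, hind, hdom⟩ := h
  obtain ⟨u, huB, hu⟩ := hdom.inter_insert_neighborSet_nonempty hv
  have huw : u ≠ w := fun huw => hw (huw ▸ hind.subset_undominated hdisj huB)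
  exact ⟨u, huB, hu.imp_right fun huv => ⟨huv, huw⟩⟩

theorem ICCoalition.exists_adj_undominated_left (h : ICCoalition G A B) (hG : G.Preconnected) :
    ∃ v ∈ undominated G A, ∃ w ∉ undominated G A, G.Adj v w :=
  exists_adj_mem_notMem_of_preconnected hG h.undominated_left_nonempty <|
    h.left_nonempty.mono fun _ ha hu => hu.1 ha

theorem encard_le_encard_neighborSet_of_forall_icCoalition {ι : Type*} {s : Set ι}
    {B : ι → Set V} (hs : s.PairwiseDisjoint B) (hB : ∀ i ∈ s, ICCoalition G A (B i))
    (hv : v ∈ undominated G A) (hw : w ∉ undominated G A) (hvw : G.Adj v w) :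
    s.encard ≤ (G.neighborSet v).encard :=
  calc
    s.encard ≤ (insert v (G.neighborSet v \ {w})).encard :=
      encard_le_encard_of_pairwiseDisjoint_of_inter_nonempty hs fun i hi =>
        (hB i hi).inter_insert_neighborSet_diff_nonempty hv hw
    _ = (G.neighborSet v).encard := Set.encard_exchange G.irrefl hvw

end Graph

theorem IsPartition.pairwiseDisjoint_coe {π : Finset (Finset V)} (hπ : IsPartition π) :
    (π : Set (Finset V)).PairwiseDisjoint ((↑) : Finset V → Set V) :=
  fun _ hA _ hB hAB => Set.disjoint_left.2 fun v hvA hvB =>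
    hAB ((hπ.2 v).unique ⟨hA, hvA⟩ ⟨hB, hvB⟩)

theorem stmt_3_general {ι : Type*} {G : SimpleGraph V} (hG : G.Connected) {X : Set V}
    {s : Set ι} {B : ι → Set V} (hs : s.PairwiseDisjoint B)
    (hB : ∀ i ∈ s, ICCoalition G X (B i)) :
    ∃ v, s.encard ≤ (G.neighborSet v).encard := by
  rcases s.eq_empty_or_nonempty with rfl | ⟨i, hi⟩
  · obtain ⟨v⟩ := hG.nonempty
    exact ⟨v, by simp⟩
  · obtain ⟨v, hv, w, hw, hvw⟩ := (hB i hi).exists_adj_undominated_left hG.preconnected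
    exact ⟨v, encard_le_encard_neighborSet_of_forall_icCoalition hs hB hv hw hvw⟩

theorem stmt_3 {V : Type*} [Fintype V] (G : SimpleGraph V) [DecidableRel G.Adj]
    (hconn : G.Connected) (π : Finset (Finset V)) (hπ : IsICPartition G π)
    (X : Finset V) (hX : X ∈ π) :
    {B : Finset V | B ∈ π ∧ B ≠ X ∧ ICCoalition G (X : Set V) (B : Set V)}.ncard
      ≤ G.maxDegree := by
  obtain ⟨v, hv⟩ := stmt_3_general hconn
    (s := {B : Finset V | B ∈ π ∧ B ≠ X ∧ ICCoalition G (X : Set V) (B : Set V)})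
    (hπ.1.pairwiseDisjoint_coe.subset fun _ hB => hB.1) fun _ hB => hB.2.2
  rw [encard_neighborSet] at hv
  exact (ENat.toNat_le_of_le_natCast hv).trans (G.degree_le_maxDegree v)

end ICNL
end

section
/- For the path P_n on n vertices: IC(P_n) = n if n ≤ 4; IC(P_n) = 4 if n = 5; IC(P_n) = 5 if 6 ≤ n ≤ 9; and IC(P_n) = 6 if n ≥ 10. -/
/-!
Record an ic-partition by a surjective colouring of the vertices.

*Upper bounds.* Suppose a colour class `A` misses the closed neighbourhood `N[v]`. Every coalition
partner of `A` then meets `N[v]`, so in a graph of maximum degree `d` a class with more than `d`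
partners has every vertex of `N[v]` in some partner. As the union of `A` with a partner is
independent, `A` also misses the closed neighbourhood of each neighbour of `v`; in a connected graph
this forces `A = ∅`. Hence a class has at most `d` partners. Every coalition meets the closed
neighbourhood of a fixed vertex `v`, which leaves at most `(deg v + 1) * (d + 1)` classes; taking
for `v` an end of a path gives the bound six.

If six classes occur on a path, they are the classes `x`, `y` of the first two vertices, the
partners `p`, `p'` of `x`, and the partners `q`, `q'` of `y`. A vertex of class `p` must have one
neighbour in `p'` and one in `y`, so the path contains a stretch `y p p' y` and likewise a stretch
`x q q' x`. These are disjoint and avoid both ends of the path, so there are at least ten vertices.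
Five classes on `P_5` would be singletons, but no pair containing the middle vertex dominates `P_5`.

*Lower bounds.* Folding the last edge of a path back onto the previous one pulls colourings of
`P_m` back to `P_(m+1)`, so it suffices to exhibit colourings for `n ≤ 4`, `n = 6` and `n = 10`.
-/

namespace ICNL

variable {V : Type*}

open Finset

section Colorings

variable {ι : Type*} {G : SimpleGraph V} {c : V → ι} {A B : Set V} {i j x p q : ι} {v : V}

/-- The colour classes of `c` are all nonempty and form an ic-partition of `G`. Colourings stand in
for partitions because disjointness of the classes is then automatic, and the condition is decidable
for a concrete colouring of a finite graph. -/
def IsICColoring (G : SimpleGraph V) (c : V → ι) : Prop :=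
  Function.Surjective c ∧
    ∀ i, (∃ v, (∀ u, c u = i ↔ u = v) ∧ Dominating G {v}) ∨
      ∃ j, ICCoalition G (c ⁻¹' {i}) (c ⁻¹' {j})

namespace ICCoalition

theorem symm (h : ICCoalition G A B) : ICCoalition G B A := by
  obtain ⟨hdisj, hA, hB, hnA, hnB, hdom⟩ := h
  exact ⟨hdisj.symm, hB, hA, hnB, hnA, Set.union_comm A B ▸ hdom⟩

theorem ne (h : ICCoalition G A B) : A ≠ B := by
  rintro rfl
  obtain ⟨-, -, -, hnA, -, hdom⟩ := h
  exact hnA (Set.union_self A ▸ hdom)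

theorem not_dominating_left (h : ICCoalition G A B) : ¬ Dominating G A := by
  obtain ⟨-, hA, -, hnA, -, -⟩ := h
  exact fun hdom => hnA ⟨hA, hdom⟩

theorem color_ne (h : ICCoalition G (c ⁻¹' {i}) (c ⁻¹' {j})) : i ≠ j := by
  rintro rfl
  exact h.ne rfl

theorem not_adj {u : V} (h : ICCoalition G (c ⁻¹' {i}) (c ⁻¹' {j})) (hu : c u = i)
    (hv : c v = j) : ¬ G.Adj u v := by
  obtain ⟨-, -, -, -, -, hind, -⟩ := h
  exact hind (Or.inl hu) (Or.inr hv)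

theorem exists_adj_color (h : ICCoalition G (c ⁻¹' {i}) (c ⁻¹' {j})) (hi : c v ≠ i)
    (hj : c v ≠ j) : ∃ u, (c u = i ∨ c u = j) ∧ G.Adj u v := by
  obtain ⟨-, -, -, -, -, -, hdom⟩ := h
  exact (hdom v).resolve_left (by rintro (h | h) <;> contradiction)

end ICCoalition

theorem exists_adj_color_of_two_partners (hp : ICCoalition G (c ⁻¹' {x}) (c ⁻¹' {p}))
    (hq : ICCoalition G (c ⁻¹' {x}) (c ⁻¹' {q})) (hpq : p ≠ q) (hv : c v = p) :
    ∃ u, c u = q ∧ G.Adj u v := by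
  obtain ⟨u, hu | hu, hadj⟩ := hq.exists_adj_color (v := v) (hv ▸ hp.color_ne.symm) (hv ▸ hpq)
  · exact absurd hadj (hp.not_adj hu hv)
  · exact ⟨u, hu, hadj⟩

theorem IsICPartition.exists_isICColoring {π : Finset (Finset V)} (h : IsICPartition G π) :
    ∃ c : V → Fin #π, IsICColoring G c := by
  obtain ⟨⟨hne, hex⟩, hcoal⟩ := h
  choose cl hcl huniq using hex
  let e : π ≃ Fin #π := Finset.equivFin π
  let c : V → Fin #π := fun v => e ⟨cl v, (hcl v).1⟩
  have mem_iff (A : π) (v : V) : c v = e A ↔ v ∈ A.1 := by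
    rw [e.apply_eq_iff_eq, Subtype.ext_iff]
    exact ⟨fun hA => hA ▸ (hcl v).2, fun hv => (huniq v A ⟨A.2, hv⟩).symm⟩
  have preimage_eq (A : π) : c ⁻¹' {e A} = (A.1 : Set V) := Set.ext (mem_iff A)
  refine ⟨c, e.forall_congr_right.1 fun A => ?_, e.forall_congr_right.1 fun A => ?_⟩
  · obtain ⟨v, hv⟩ := hne A A.2
    exact ⟨v, (mem_iff A v).2 hv⟩
  · rcases hcoal A A.2 with ⟨v, hA, hdom⟩ | ⟨-, B, hB, -, hAB⟩
    · refine .inl ⟨v, fun u => ?_, hA ▸ hdom⟩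
      rw [mem_iff, ← Finset.mem_coe, hA, Set.mem_singleton_iff]
    · refine .inr ⟨e ⟨B, hB⟩, ?_⟩
      rwa [preimage_eq, preimage_eq]

theorem IsICColoring.exists_isICPartition [Finite V] [Fintype ι] (h : IsICColoring G c) :
    ∃ π : Finset (Finset V), IsICPartition G π ∧ #π = Fintype.card ι := by
  classical
  cases nonempty_fintype V
  obtain ⟨hsurj, hcoal⟩ := h
  let F : ι → Finset V := fun i => {v | c v = i}
  have mem_F (i : ι) (v : V) : v ∈ F i ↔ c v = i := by simp [F]
  have coe_F (i : ι) : (F i : Set V) = c ⁻¹' {i} := by ext; simp [F]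
  have F_injective : Function.Injective F := fun i j hij => by
    obtain ⟨v, rfl⟩ := hsurj i
    exact (mem_F j v).1 (hij ▸ (mem_F _ v).2 rfl)
  have F_mem (i : ι) : F i ∈ univ.image F := mem_image_of_mem F (mem_univ i)
  refine ⟨univ.image F, ⟨⟨?_, fun v => ⟨F (c v), ⟨F_mem _, (mem_F _ v).2 rfl⟩, ?_⟩⟩, ?_⟩, ?_⟩
  · exact forall_mem_image.2 fun i _ => (hsurj i).imp fun v => (mem_F i v).2
  · rintro A ⟨hA, hv⟩
    obtain ⟨i, -, rfl⟩ := mem_image.1 hA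
    rw [(mem_F i v).1 hv]
  · refine forall_mem_image.2 fun i _ => ?_
    rcases hcoal i with ⟨v, hv, hdom⟩ | ⟨j, hij⟩
    · have hF : (F i : Set V) = {v} := by
        rw [coe_F]
        exact Set.ext hv
      exact .inl ⟨v, hF, hF ▸ hdom⟩
    · rw [← coe_F i, ← coe_F j] at hij
      refine .inr ⟨fun hdom => hij.not_dominating_left hdom.2, F j, F_mem j, fun hji => ?_, hij⟩
      exact hij.ne (congrArg _ hji.symm)
  · rw [card_image_of_injective _ F_injective, card_univ]

theorem IC_eq_of_isICColoring [Finite V] {k : ℕ} {c : V → Fin k} (hc : IsICColoring G c)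
    (hle : ∀ (m : ℕ) (d : V → Fin m), IsICColoring G d → m ≤ k) : IC G = k := by
  refine IsGreatest.csSup_eq ⟨by simpa using hc.exists_isICPartition, ?_⟩
  rintro _ ⟨π, hπ, rfl⟩
  obtain ⟨d, hd⟩ := hπ.exists_isICColoring
  exact hle _ d hd

theorem IsICColoring.exists_coalition (hc : IsICColoring G c) (hG : ∀ v, ¬ Dominating G {v})
    (i : ι) : ∃ j, ICCoalition G (c ⁻¹' {i}) (c ⁻¹' {j}) :=
  (hc.2 i).resolve_left fun ⟨v, _, hdom⟩ => hG v hdom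

theorem IsICColoring.exists_dominating_pair (hc : IsICColoring G c)
    (hinj : Function.Injective c) (u : V) : ∃ v, Dominating G {u, v} := by
  rcases hc.2 (c u) with ⟨v, hv, hdom⟩ | ⟨j, -, -, -, -, -, -, hdom⟩
  · exact ⟨u, by rwa [Set.pair_eq_singleton, (hv u).1 rfl]⟩
  · obtain ⟨v, rfl⟩ := hc.1 j
    refine ⟨v, ?_⟩
    have hpre (w : V) : c ⁻¹' {c w} = {w} := Set.ext fun _ => hinj.eq_iff
    rwa [hpre, hpre] at hdom

end Colorings

section Partners

variable {ι : Type*} [Fintype ι] {G : SimpleGraph V} {c : V → ι} {d : ℕ}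

open Classical in
/-- The colours whose classes form an independent coalition with the class of colour `i`; their
number is what bounds the size of an ic-partition. -/
noncomputable def partners (G : SimpleGraph V) (c : V → ι) (i : ι) : Finset ι :=
  {j | ICCoalition G (c ⁻¹' {i}) (c ⁻¹' {j})}

theorem mem_partners {i j : ι} :
    j ∈ partners G c i ↔ ICCoalition G (c ⁻¹' {i}) (c ⁻¹' {j}) := by
  simp [partners]

/-- The closed neighbourhood `N[v]`, which every dominating set meets; a `Finset` so that the
colours occurring in it can be counted. -/
def closedNeighborFinset [DecidableEq V] (G : SimpleGraph V) [G.LocallyFinite] (v : V) : Finset V :=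
  insert v (G.neighborFinset v)

variable [G.LocallyFinite]

theorem card_closedNeighborFinset [DecidableEq V] (v : V) :
    #(closedNeighborFinset G v) = G.degree v + 1 := by
  rw [closedNeighborFinset, card_insert_of_notMem (by simp), G.card_neighborFinset_eq_degree]

theorem dominating_iff_closedNeighborFinset [DecidableEq V] {S : Set V} :
    Dominating G S ↔ ∀ v, ∃ u ∈ closedNeighborFinset G v, u ∈ S := by
  refine forall_congr' fun v => ?_
  rw [closedNeighborFinset, exists_mem_insert]
  simp only [SimpleGraph.mem_neighborFinset, G.adj_comm v, and_comm]

theorem partners_subset_image_closedNeighborFinset [DecidableEq V] [DecidableEq ι]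
    {i : ι} {v : V} (hv : ∀ u ∈ closedNeighborFinset G v, c u ≠ i) :
    partners G c i ⊆ (closedNeighborFinset G v).image c := by
  intro j hj
  obtain ⟨-, -, -, -, -, -, hdom⟩ := mem_partners.1 hj
  obtain ⟨u, hu, hui | huj⟩ := dominating_iff_closedNeighborFinset.1 hdom v
  · exact absurd hui (hv u hu)
  · exact mem_image.2 ⟨u, hu, huj⟩

theorem forall_closedNeighborFinset_ne_of_adj [DecidableEq V] (hdeg : ∀ v, G.degree v ≤ d)
    {i : ι} (hd : d < #(partners G c i)) {v w : V} (hvw : G.Adj v w)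
    (hv : ∀ u ∈ closedNeighborFinset G v, c u ≠ i) :
    ∀ u ∈ closedNeighborFinset G w, c u ≠ i := by
  classical
  have hcard : #((closedNeighborFinset G v).image c) ≤ #(partners G c i) :=
    calc #((closedNeighborFinset G v).image c)
        ≤ #(closedNeighborFinset G v) := card_image_le
      _ = G.degree v + 1 := card_closedNeighborFinset v
      _ ≤ d + 1 := by gcongr; exact hdeg v
      _ ≤ #(partners G c i) := hd
  have himage : partners G c i = (closedNeighborFinset G v).image c :=
    eq_of_subset_of_card_le (partners_subset_image_closedNeighborFinset hv) hcard
  have hw : w ∈ closedNeighborFinset G v := by simp [closedNeighborFinset, hvw]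
  have hcoal : ICCoalition G (c ⁻¹' {i}) (c ⁻¹' {c w}) :=
    mem_partners.1 (himage ▸ mem_image_of_mem c hw)
  intro u hu hui
  obtain rfl | hadj : u = w ∨ G.Adj w u := by simpa [closedNeighborFinset] using hu
  · exact hv u hw hui
  · exact hcoal.not_adj hui rfl hadj.symm

theorem card_partners_le (hG : G.Preconnected) (hdeg : ∀ v, G.degree v ≤ d)
    (hc : Function.Surjective c) (i : ι) : #(partners G c i) ≤ d := by
  classical
  by_contra! hd
  obtain ⟨j, hj⟩ := card_pos.1 (Nat.zero_lt_of_lt hd)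
  obtain ⟨v, hv⟩ : ∃ v, ∀ u ∈ closedNeighborFinset G v, c u ≠ i := by
    have hnot := (mem_partners.1 hj).not_dominating_left
    rw [dominating_iff_closedNeighborFinset] at hnot
    push Not at hnot
    exact hnot
  have missed (w : V) : ∀ u ∈ closedNeighborFinset G w, c u ≠ i := by
    induction (G.reachable_iff_reflTransGen v w).1 (hG v w) with
    | refl => exact hv
    | tail _ hadj ih => exact forall_closedNeighborFinset_ne_of_adj hdeg hd hadj ih
  obtain ⟨a, ha⟩ := hc i
  exact missed a a (mem_insert_self _ _) ha

theorem IsICColoring.univ_subset_biUnion [DecidableEq V] [DecidableEq ι] (hc : IsICColoring G c)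
    (hG : ∀ v, ¬ Dominating G {v}) (v : V) :
    univ ⊆ (closedNeighborFinset G v).biUnion fun u => insert (c u) (partners G c (c u)) := by
  intro i _
  obtain ⟨j, hij⟩ := hc.exists_coalition hG i
  obtain ⟨-, -, -, -, -, -, hdom⟩ := id hij
  obtain ⟨u, hu, rfl | rfl⟩ := dominating_iff_closedNeighborFinset.1 hdom v
  · exact mem_biUnion.2 ⟨u, hu, mem_insert_self _ _⟩
  · exact mem_biUnion.2 ⟨u, hu, mem_insert_of_mem (mem_partners.2 hij.symm)⟩

theorem IsICColoring.card_le_mul (hc : IsICColoring G c) (hG : G.Preconnected)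
    (hdom : ∀ v, ¬ Dominating G {v}) (hdeg : ∀ v, G.degree v ≤ d) (v : V) :
    Fintype.card ι ≤ (G.degree v + 1) * (d + 1) := by
  classical
  rw [← card_univ, ← card_closedNeighborFinset]
  refine (card_le_card (hc.univ_subset_biUnion hdom v)).trans ?_
  refine card_biUnion_le_card_mul _ _ _ fun u _ => (card_insert_le _ _).trans ?_
  gcongr
  exact card_partners_le hG hdeg hc.1 _

end Partners

section DoubleStar

variable {ι : Type*} {G : SimpleGraph V} {c : V → ι} {x p p' y q q' : ι} {v w : V}

/-- Six distinct colours whose coalitions contain two stars, one with hub `x` and leaves `p`, `p'`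
and one with hub `y` and leaves `q`, `q'`. This is the configuration forced by an ic-partition of a
path into six classes. -/
structure DoubleStar (G : SimpleGraph V) (c : V → ι) (x p p' y q q' : ι) : Prop where
  nodup : [x, p, p', y, q, q'].Nodup
  coalition_xp : ICCoalition G (c ⁻¹' {x}) (c ⁻¹' {p})
  coalition_xp' : ICCoalition G (c ⁻¹' {x}) (c ⁻¹' {p'})
  coalition_yq : ICCoalition G (c ⁻¹' {y}) (c ⁻¹' {q})
  coalition_yq' : ICCoalition G (c ⁻¹' {y}) (c ⁻¹' {q'})

namespace DoubleStar

theorem swap_hubs (h : DoubleStar G c x p p' y q q') : DoubleStar G c y q q' x p p' :=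
  ⟨List.nodup_append_comm (l₁ := [x, p, p']).1 h.nodup, h.coalition_yq, h.coalition_yq',
    h.coalition_xp, h.coalition_xp'⟩

theorem swap_leaves (h : DoubleStar G c x p p' y q q') : DoubleStar G c x p' p y q q' :=
  ⟨((List.Perm.swap p' p _).cons x).nodup h.nodup, h.coalition_xp', h.coalition_xp,
    h.coalition_yq, h.coalition_yq'⟩

theorem exists_adj_other_leaf (h : DoubleStar G c x p p' y q q') (hv : c v = p) :
    ∃ u, c u = p' ∧ G.Adj u v :=
  exists_adj_color_of_two_partners h.coalition_xp h.coalition_xp' (by grind [h.nodup]) hv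

/-- Otherwise `v` would need three neighbours, of colours `p'`, `q` and `q'`. -/
theorem exists_adj_other_hub [Fintype (G.neighborSet v)] (h : DoubleStar G c x p p' y q q')
    (hdeg : G.degree v ≤ 2) (hv : c v = p) : ∃ u, c u = y ∧ G.Adj u v := by
  by_contra! hy
  have hnodup := h.nodup
  simp only [List.nodup_cons, List.mem_cons, not_or] at hnodup
  obtain ⟨u, hu, huv⟩ := h.exists_adj_other_leaf hv
  obtain ⟨a, ha, hav⟩ := h.coalition_yq.exists_adj_color (v := v) (by grind) (by grind)
  obtain ⟨b, hb, hbv⟩ := h.coalition_yq'.exists_adj_color (v := v) (by grind) (by grind)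
  refine hdeg.not_gt (two_lt_card.2 ⟨u, ?_, a, ?_, b, ?_, ?_⟩)
  · simpa using huv.symm
  · simpa using hav.symm
  · simpa using hbv.symm
  · grind

theorem exists_ne_adj_of_adj_leaf (h : DoubleStar G c x p p' y q q') (hw : c w = y)
    (hv : c v = p) : ∃ u, u ≠ v ∧ G.Adj u w := by
  have hnodup := h.nodup
  obtain ⟨u, hu, huw⟩ := h.coalition_xp'.exists_adj_color (v := w) (by grind) (by grind)
  exact ⟨u, by grind, huw⟩

end DoubleStar

end DoubleStar

section Pullback

variable {W ι : Type*} {G : SimpleGraph V} {H : SimpleGraph W} {S : Set W} {c : W → ι}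

theorem IndepSet.preimage (hS : IndepSet H S) (f : G →g H) : IndepSet G (f ⁻¹' S) :=
  fun _ hu _ hv hadj => hS hu hv (f.map_adj hadj)

theorem Dominating.of_preimage {f : G →g H} (hf : Function.Surjective f)
    (h : Dominating G (f ⁻¹' S)) : Dominating H S := by
  intro w
  obtain ⟨v, rfl⟩ := hf w
  exact (h v).imp id fun ⟨u, hu, hadj⟩ => ⟨f u, hu, f.map_adj hadj⟩

theorem ICCoalition.preimage {A B : Set W} (h : ICCoalition H A B) {f : G →g H}
    (hf : Function.Surjective f) (hdom : ∀ S, Dominating H S → Dominating G (f ⁻¹' S)) :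
    ICCoalition G (f ⁻¹' A) (f ⁻¹' B) := by
  have hnA := h.not_dominating_left
  have hnB := h.symm.not_dominating_left
  obtain ⟨hdisj, hA, hB, -, -, hABind, hABdom⟩ := h
  exact ⟨hdisj.preimage f, hA.preimage f, hB.preimage f, fun h => hnA (h.2.of_preimage hf),
    fun h => hnB (h.2.of_preimage hf), hABind.preimage f, hdom _ hABdom⟩

theorem IsICColoring.comp (hc : IsICColoring H c) (hH : ∀ w, ¬ Dominating H {w}) {f : G →g H}
    (hf : Function.Surjective f) (hdom : ∀ S, Dominating H S → Dominating G (f ⁻¹' S)) :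
    IsICColoring G (c ∘ f) := by
  refine ⟨hc.1.comp hf, fun i => .inr ?_⟩
  obtain ⟨j, hij⟩ := hc.exists_coalition hH i
  exact ⟨j, hij.preimage hf hdom⟩

end Pullback

section Decidability

variable [Fintype V] (G : SimpleGraph V) [DecidableRel G.Adj]

instance (S : Set V) [DecidablePred (· ∈ S)] : Decidable (Dominating G S) :=
  inferInstanceAs (Decidable (∀ v, v ∈ S ∨ ∃ u, u ∈ S ∧ G.Adj u v))

instance (S : Set V) [DecidablePred (· ∈ S)] : Decidable (IndepSet G S) :=
  inferInstanceAs (Decidable (∀ u, u ∈ S → ∀ v, v ∈ S → ¬ G.Adj u v))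

instance (S : Set V) [DecidablePred (· ∈ S)] : Decidable (IndepDom G S) :=
  inferInstanceAs (Decidable (IndepSet G S ∧ Dominating G S))

instance (A B : Set V) [DecidablePred (· ∈ A)] [DecidablePred (· ∈ B)] :
    Decidable (ICCoalition G A B) :=
  have : Decidable (Disjoint A B) := decidable_of_iff (∀ v, v ∈ A → v ∉ B) Set.disjoint_left.symm
  inferInstanceAs (Decidable (_ ∧ _))

instance {ι : Type*} [Fintype ι] [DecidableEq ι] [DecidableEq V] (c : V → ι) :
    Decidable (IsICColoring G c) :=
  have (i : ι) : DecidablePred (· ∈ c ⁻¹' {i}) := fun v => decidable_of_iff (c v = i) Iff.rfl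
  inferInstanceAs (Decidable (_ ∧ _))

end Decidability

section Path

open SimpleGraph

variable {n k : ℕ}

instance : DecidableRel (pathGraph n).Adj := fun _ _ => decidable_of_iff' _ pathGraph_adj

theorem not_dominating_singleton_pathGraph (hn : 4 ≤ n) (v : Fin n) :
    ¬ Dominating (pathGraph n) {v} := by
  intro h
  have near (w : Fin n) : w.val ≤ v + 1 ∧ v.val ≤ w + 1 := by
    rcases h w with rfl | ⟨_, rfl, hadj⟩
    · omega
    · rw [pathGraph_adj] at hadj
      omega
  have h0 := near ⟨0, by omega⟩
  have h3 := near ⟨3, by omega⟩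
  simp only at h0 h3
  omega

theorem degree_pathGraph_le_two (v : Fin n) : (pathGraph n).degree v ≤ 2 := by
  have hsub : ((pathGraph n).neighborFinset v).map Fin.valEmbedding ⊆ {v.val - 1, v.val + 1} := by
    intro u hu
    simp only [mem_map, mem_neighborFinset, pathGraph_adj, Fin.valEmbedding_apply] at hu
    grind
  simpa using (card_le_card hsub).trans card_le_two

theorem closedNeighborFinset_pathGraph_zero :
    closedNeighborFinset (pathGraph (n + 2)) 0 = {0, 1} := by
  ext v
  simp only [closedNeighborFinset, mem_insert, mem_neighborFinset, pathGraph_adj, mem_singleton,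
    Fin.ext_iff, Fin.val_zero, Fin.val_one]
  omega

theorem degree_pathGraph_zero : (pathGraph (n + 2)).degree 0 = 1 := by
  have h := card_closedNeighborFinset (G := pathGraph (n + 2)) 0
  rw [closedNeighborFinset_pathGraph_zero, card_pair (by simp)] at h
  omega

theorem IsICColoring.le_six {c : Fin n → Fin k} (hc : IsICColoring (pathGraph n) c)
    (hn : 4 ≤ n) : k ≤ 6 := by
  obtain ⟨m, rfl⟩ := Nat.exists_eq_add_of_le' (show 2 ≤ n by omega)
  simpa [degree_pathGraph_zero] using hc.card_le_mul (pathGraph_preconnected _)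
    (not_dominating_singleton_pathGraph hn) degree_pathGraph_le_two 0

theorem IsICColoring.exists_doubleStar {c : Fin n → Fin 6} (hc : IsICColoring (pathGraph n) c)
    (hn : 4 ≤ n) : ∃ x p p' y q q', DoubleStar (pathGraph n) c x p p' y q q' := by
  obtain ⟨m, rfl⟩ := Nat.exists_eq_add_of_le' (show 2 ≤ n by omega)
  let P := partners (pathGraph (m + 2)) c (c 0)
  let Q := partners (pathGraph (m + 2)) c (c 1)
  have hcover : univ ⊆ insert (c 0) P ∪ insert (c 1) Q := by
    simpa [closedNeighborFinset_pathGraph_zero] using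
      hc.univ_subset_biUnion (not_dominating_singleton_pathGraph hn) 0
  have hcard (i : Fin 6) : #(partners (pathGraph (m + 2)) c i) ≤ 2 :=
    card_partners_le (pathGraph_preconnected _) degree_pathGraph_le_two hc.1 i
  have hsix : 6 ≤ #(insert (c 0) P ∪ insert (c 1) Q) := by simpa using card_le_card hcover
  have hPQ : #P = 2 ∧ #Q = 2 := by
    grind [card_union_le (insert (c 0) P) (insert (c 1) Q), card_insert_le (c 0) P,
      card_insert_le (c 1) Q, hcard (c 0), hcard (c 1)]
  obtain ⟨p, p', -, hP⟩ := card_eq_two.1 hPQ.1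
  obtain ⟨q, q', -, hQ⟩ := card_eq_two.1 hPQ.2
  refine ⟨c 0, p, p', c 1, q, q', ?_, mem_partners.1 ?_, mem_partners.1 ?_, mem_partners.1 ?_,
    mem_partners.1 ?_⟩
  · have hlist : [c 0, p, p', c 1, q, q'].toFinset = insert (c 0) P ∪ insert (c 1) Q := by
      ext
      simp only [hP, hQ, List.mem_toFinset, List.mem_cons, List.not_mem_nil, mem_union,
        mem_insert, mem_singleton]
      tauto
    rw [← hlist] at hsix
    rw [← Multiset.coe_nodup, ← Multiset.toFinset_card_eq_card_iff_nodup]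
    exact le_antisymm (Multiset.toFinset_card_le _) hsix
  all_goals grind

theorem DoubleStar.exists_stretch {ι : Type*} {c : Fin n → ι} {x p p' y q q' : ι}
    (h : DoubleStar (pathGraph n) c x p p' y q q') (hp : ∃ v, c v = p) :
    ∃ i, 1 ≤ i ∧ i + 4 < n ∧
      ∀ v : Fin n, i ≤ v → v < i + 4 → c v = y ∨ c v = p ∨ c v = p' := by
  have hnodup := h.nodup
  obtain ⟨v, hv⟩ := hp
  obtain ⟨u, hu, huv⟩ := h.exists_adj_other_leaf hv
  obtain ⟨w, hw, hwv⟩ := h.exists_adj_other_hub (degree_pathGraph_le_two v) hv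
  obtain ⟨z, hz, hzu⟩ := h.swap_leaves.exists_adj_other_hub (degree_pathGraph_le_two u) hu
  obtain ⟨w', hw'v, hw'w⟩ := h.exists_ne_adj_of_adj_leaf hw hv
  obtain ⟨z', hz'u, hz'z⟩ := h.swap_leaves.exists_ne_adj_of_adj_leaf hz hu
  rw [pathGraph_adj] at huv hwv hzu hw'w hz'z
  have hwu : w ≠ u := by grind
  have hzv : z ≠ v := by grind
  rw [ne_eq, Fin.ext_iff] at hw'v hz'u hwu hzv
  rcases huv with huv | hvu
  · refine ⟨z, by omega, by omega, fun a hza haz => ?_⟩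
    obtain rfl | rfl | rfl | rfl : a = z ∨ a = u ∨ a = v ∨ a = w := by
      simp only [Fin.ext_iff]
      omega
    all_goals tauto
  · refine ⟨w, by omega, by omega, fun a hwa haw => ?_⟩
    obtain rfl | rfl | rfl | rfl : a = z ∨ a = u ∨ a = v ∨ a = w := by
      simp only [Fin.ext_iff]
      omega
    all_goals tauto

theorem DoubleStar.ten_le {ι : Type*} {c : Fin n → ι} {x p p' y q q' : ι}
    (h : DoubleStar (pathGraph n) c x p p' y q q') (hc : Function.Surjective c) : 10 ≤ n := by
  obtain ⟨i, hi, hin, hci⟩ := h.exists_stretch (hc p)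
  obtain ⟨j, hj, hjn, hcj⟩ := h.swap_hubs.exists_stretch (hc q)
  have hdisj (v : Fin n) : ¬ ((i ≤ v ∧ v < i + 4) ∧ j ≤ v ∧ v < j + 4) := by
    grind [h.nodup]
  have hii := hdisj ⟨i, by omega⟩
  have hjj := hdisj ⟨j, by omega⟩
  simp only at hii hjj
  omega

theorem IsICColoring.le_five {c : Fin n → Fin k} (hc : IsICColoring (pathGraph n) c)
    (hn : 4 ≤ n) (hn' : n ≤ 9) : k ≤ 5 := by
  by_contra! hk
  obtain rfl : k = 6 := le_antisymm (hc.le_six hn) hk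
  obtain ⟨_, _, _, _, _, _, hstar⟩ := hc.exists_doubleStar hn
  exact absurd (hstar.ten_le hc.1) (by omega)

theorem IsICColoring.le_four {c : Fin 5 → Fin k} (hc : IsICColoring (pathGraph 5) c) :
    k ≤ 4 := by
  by_contra! hk
  obtain rfl : k = 5 := le_antisymm (hc.le_five (by omega) (by omega)) hk
  obtain ⟨v, hv⟩ := hc.exists_dominating_pair (Finite.injective_iff_surjective.2 hc.1) 2
  revert v
  decide

/-- The retraction of a path onto its initial segment that reflects the last vertex. Colourings of
the shorter path are extended by composing with it. -/
def foldLast (m : ℕ) : pathGraph (m + 3) →g pathGraph (m + 2) where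
  toFun v := if h : v.val < m + 2 then ⟨v, h⟩ else ⟨m, by omega⟩
  map_rel' {u v} huv := by
    rw [pathGraph_adj] at huv ⊢
    split_ifs <;> simp only <;> omega

theorem foldLast_castSucc (m : ℕ) (v : Fin (m + 2)) : foldLast m v.castSucc = v :=
  dif_pos v.isLt

theorem foldLast_last (m : ℕ) : foldLast m (Fin.last (m + 2)) = (Fin.last m).castSucc :=
  dif_neg (lt_irrefl _)

theorem foldLast_surjective (m : ℕ) : Function.Surjective (foldLast m) :=
  fun v => ⟨v.castSucc, foldLast_castSucc m v⟩

theorem Dominating.preimage_foldLast {m : ℕ} {S : Set (Fin (m + 2))}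
    (h : Dominating (pathGraph (m + 2)) S) :
    Dominating (pathGraph (m + 3)) (foldLast m ⁻¹' S) := by
  have castSucc_mem {u : Fin (m + 2)} (hu : u ∈ S) : u.castSucc ∈ foldLast m ⁻¹' S := by
    rwa [Set.mem_preimage, foldLast_castSucc]
  intro v
  induction v using Fin.lastCases with
  | cast v =>
    refine (h v).imp castSucc_mem fun ⟨u, hu, huv⟩ => ⟨u.castSucc, castSucc_mem hu, ?_⟩
    simpa only [pathGraph_adj, Fin.val_castSucc] using huv
  | last =>
    rcases h (Fin.last (m + 1)) with hlast | ⟨u, hu, hadj⟩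
    · exact .inr ⟨_, castSucc_mem hlast, by simp [pathGraph_adj]⟩
    · obtain rfl : u = (Fin.last m).castSucc := by
        rw [pathGraph_adj] at hadj
        simp only [Fin.ext_iff, Fin.val_last, Fin.val_castSucc] at hadj ⊢
        omega
      exact .inl (by rwa [Set.mem_preimage, foldLast_last])

theorem exists_isICColoring_pathGraph_of_le {m : ℕ} (hm : 4 ≤ m) (hmn : m ≤ n)
    (h : ∃ c : Fin m → Fin k, IsICColoring (pathGraph m) c) :
    ∃ c : Fin n → Fin k, IsICColoring (pathGraph n) c := by
  induction n, hmn using Nat.le_induction with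
  | base => exact h
  | succ n hmn ih =>
    obtain ⟨c, hc⟩ := ih
    obtain ⟨l, rfl⟩ := Nat.exists_eq_add_of_le' (show 2 ≤ n by omega)
    exact ⟨c ∘ foldLast l, hc.comp (not_dominating_singleton_pathGraph (by omega))
      (foldLast_surjective l) fun _ hS => hS.preimage_foldLast⟩

theorem isICColoring_pathGraph_id (hn : n ≤ 4) :
    IsICColoring (pathGraph n) (id : Fin n → Fin n) := by
  interval_cases n <;> decide

theorem isICColoring_pathGraph_six : IsICColoring (pathGraph 6) ![(0 : Fin 5), 1, 2, 3, 4, 0] := by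
  decide

theorem isICColoring_pathGraph_ten :
    IsICColoring (pathGraph 10) ![(0 : Fin 6), 1, 2, 3, 1, 0, 4, 5, 0, 1] := by
  decide

end Path

theorem stmt_9 (n : ℕ) :
    (n ≤ 4 → IC (SimpleGraph.pathGraph n) = n) ∧
    (n = 5 → IC (SimpleGraph.pathGraph n) = 4) ∧
    (6 ≤ n → n ≤ 9 → IC (SimpleGraph.pathGraph n) = 5) ∧
    (10 ≤ n → IC (SimpleGraph.pathGraph n) = 6) := by
  refine ⟨fun hn => ?_, ?_, fun hn hn' => ?_, fun hn => ?_⟩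
  · refine IC_eq_of_isICColoring (isICColoring_pathGraph_id hn) fun m d hd => ?_
    simpa using Fintype.card_le_of_surjective d hd.1
  · rintro rfl
    obtain ⟨c, hc⟩ := exists_isICColoring_pathGraph_of_le (n := 5) le_rfl (by omega)
      ⟨_, isICColoring_pathGraph_id le_rfl⟩
    exact IC_eq_of_isICColoring hc fun m d hd => hd.le_four
  · obtain ⟨c, hc⟩ := exists_isICColoring_pathGraph_of_le (by omega) hn
      ⟨_, isICColoring_pathGraph_six⟩
    exact IC_eq_of_isICColoring hc fun m d hd => hd.le_five (by omega) hn'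
  · obtain ⟨c, hc⟩ := exists_isICColoring_pathGraph_of_le (by omega) hn
      ⟨_, isICColoring_pathGraph_ten⟩
    exact IC_eq_of_isICColoring hc fun m d hd => hd.le_six (by omega)

end ICNL
end
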